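/- Let τ_n be a topology on 𝒪^n(ℱ_n). The topology t_{ℱ_n}(τ_n) on C(Y,Z) is jointly continuous if and only if for every topological space X and every map G : X → C(Y,Z), the continuity with respect to the first variable of the map Ḡ_n : X × 𝒪(Z) → 𝒪^n(ℱ_n) defined by Ḡ_n(x,U) = O^n((G(x))⁻¹(U)) implies the continuity of the map G̃ : X×Y → Z, G̃(x,y) = G(x)(y). -/

import Mathlib

open TopologicalSpace Set Topology

universe u v w

/-- Iterated stage types: `Stage Y 0 = 𝒪(Y)` and `Stage Y (k+1)` is the type in which the
level-`(k+1)` objects `O^{k+1}(U)` live. -/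
@[reducible] def Stage (Y : Type u) [TopologicalSpace Y] : ℕ → Type u
  | 0 => Opens Y
  | k + 1 => Set (Set (Stage Y k))

/-- `famO F k U` is `O^{k+1}(U)`, where the family `ℱ_{k+1}` is `F k`.
So `famO F 0 U = O¹(U) = {φ ∈ ℱ₁ : U ∈ φ}` and
`famO F (k+1) U = O^{k+2}(U) = {φ ∈ ℱ_{k+2} : O^{k+1}(U) ∈ φ}`. -/
def famO {Y : Type u} [TopologicalSpace Y] (F : ∀ k, Set (Set (Stage Y k))) :
    ∀ k, Opens Y → Stage Y (k + 1)
  | 0, U => {φ ∈ F 0 | U ∈ φ}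
  | k + 1, U => {φ ∈ F (k + 1) | famO F k U ∈ φ}

variable {Y : Type u} [TopologicalSpace Y]

/-- The set `𝒪^{m+1}(ℱ_{m+1}) = {O^{m+1}(U) : U ∈ 𝒪(Y)}`, as a type. -/
abbrev OmegaN (F : ∀ k, Set (Set (Stage Y k))) (m : ℕ) : Type u :=
  {s : Stage Y (m + 1) // s ∈ Set.range (famO F m)}

/-- The map `Φ_{ℱ_{m+1}} : 𝒪(Y) → 𝒪^{m+1}(ℱ_{m+1})`, `U ↦ O^{m+1}(U)`. -/
def onMap (F : ∀ k, Set (Set (Stage Y k))) (m : ℕ) (U : Opens Y) : OmegaN F m :=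
  ⟨famO F m U, Set.mem_range_self U⟩

/-- The `ℱ_{m+1}(τ)`-family-open topology `t_{ℱ_{m+1}}(τ)` on `C(Y, Z)`: it is generated by the
subbasic sets `⟨ℍ, U⟩ = {f ∈ C(Y,Z) : O^{m+1}(f⁻¹(U)) ∈ ℍ}`, `ℍ ∈ τ`, `U ∈ 𝒪(Z)`. -/
def famTop (Z : Type v) [TopologicalSpace Z] {Y : Type u} [TopologicalSpace Y]
    (F : ∀ k, Set (Set (Stage Y k))) (m : ℕ)
    (τ : TopologicalSpace (OmegaN F m)) : TopologicalSpace C(Y, Z) :=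
  TopologicalSpace.generateFrom
    {S | ∃ (H : Set (OmegaN F m)) (U : Opens Z), IsOpen[τ] H ∧
      S = {f : C(Y, Z) | onMap F m (Opens.comap f U) ∈ H}}

/-- A topology `t` on `C(Y, Z)` is jointly continuous if for every topological space `X`,
continuity of `G : X → C_t(Y, Z)` implies continuity of `G̃ : X × Y → Z`, `G̃(x,y) = G(x)(y)`. -/
def IsJointlyContinuousTop {Y : Type u} {Z : Type v} [TopologicalSpace Y] [TopologicalSpace Z]
    (t : TopologicalSpace C(Y, Z)) : Prop :=
  ∀ (X : Type w) [tX : TopologicalSpace X] (G : X → C(Y, Z)),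
    Continuous[tX, t] G → Continuous fun p : X × Y => G p.1 p.2

theorem continuous_iInf_induced_rng {X α ι : Type*} {β : ι → Type*} [TopologicalSpace X]
    {t : ∀ i, TopologicalSpace (β i)} {e : ∀ i, α → β i} {g : X → α} :
    Continuous[_, ⨅ i, induced (e i) (t i)] g ↔ ∀ i, Continuous[_, t i] (e i ∘ g) := by
  simp only [continuous_iInf_rng, continuous_induced_rng]

theorem famTop_eq_iInf_induced (Z : Type v) [TopologicalSpace Z]
    (F : ∀ k, Set (Set (Stage Y k))) (m : ℕ) (τ : TopologicalSpace (OmegaN F m)) :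
    famTop Z F m τ =
      ⨅ U : Opens Z, induced (fun f : C(Y, Z) => onMap F m (Opens.comap f U)) τ := by
  rw [famTop, ← generateFrom_iUnion_isOpen]
  congr 1
  ext S
  simp only [mem_ofPred_eq, mem_iUnion, isOpen_induced_iff]
  constructor
  · rintro ⟨H, U, hH, rfl⟩
    exact ⟨U, H, hH, rfl⟩
  · rintro ⟨U, H, hH, rfl⟩
    exact ⟨H, U, hH, rfl⟩

theorem stmt16_general {Z : Type v} [TopologicalSpace Z] {ι : Type*} {A : ι → Type*}
    (t : ∀ i, TopologicalSpace (A i)) (e : ∀ i, C(Y, Z) → A i) :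
    IsJointlyContinuousTop.{u, v, w} (⨅ i, induced (e i) (t i)) ↔
      ∀ (X : Type w) [tX : TopologicalSpace X] (G : X → C(Y, Z)),
        (∀ i, Continuous[tX, t i] fun x => e i (G x)) →
        Continuous fun p : X × Y => G p.1 p.2 :=
  forall₃_congr fun _ _ _ => imp_congr_left continuous_iInf_induced_rng

/-- The topology `t_{ℱ_n}(τ)` on `C(Y,Z)` is jointly continuous iff for every topological
space `X` and every `G : X → C(Y,Z)`, continuity with respect to the first variable of
`Ḡ_n : X × 𝒪(Z) → 𝒪^n(ℱ_n)`, `Ḡ_n(x, U) = O^n((G(x))⁻¹(U))`, implies continuity of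
`G̃ : X × Y → Z`, `G̃(x,y) = G(x)(y)` (here `n = m + 1`). -/
theorem stmt16 (Z : Type v) [TopologicalSpace Z] (F : ∀ k, Set (Set (Stage Y k)))
    (hF : ∀ k, ∀ φ ∈ F (k + 1), ∀ x ∈ φ, x ∈ Set.range (famO F k))
    (m : ℕ) (τ : TopologicalSpace (OmegaN F m)) :
    IsJointlyContinuousTop.{u, v, w} (famTop Z F m τ) ↔
      ∀ (X : Type w) [tX : TopologicalSpace X],
        ∀ G : X → C(Y, Z),
          (∀ U : Opens Z, Continuous[tX, τ] fun x : X => onMap F m (Opens.comap (G x) U)) →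
          Continuous fun p : X × Y => G p.1 p.2 := by
  rw [famTop_eq_iInf_induced]
  exact stmt16_general _ _
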